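/- Let p : 𝔅 → G be an upper semicontinuous Banach bundle over a second countable locally compact Hausdorff space G such that the Banach space Γ₀(G;𝔅) is separable, and let ν be a generalized Radon measure on 𝔅 with total variation |ν|. Then for every x ∈ G there exists a continuous linear functional ε_x in the dual space B(x)* with ‖ε_x‖ ≤ 1 such that: (1) for each f ∈ Γ_c(G;𝔅), the function x ↦ ε_x(f(x)) is a bounded Borel function on G vanishing off a compact set; and (2) ν(f) = ∫_G ε_x(f(x)) d|ν|(x) for all f ∈ Γ_c(G;𝔅). -/

import Mathlib

open MeasureTheory Filter Topology Set

/-- An upper semicontinuous Banach bundle over a topological space `X`, with fibres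
`Fib x` (each a complex Banach space), total space `(x : X) × Fib x` and bundle
projection `Sigma.fst`.  The axioms are (B1)–(B4) of the paper, together with the
standing assumption that the bundle has enough sections. -/
structure USCBanachBundle (X : Type) [TopologicalSpace X] (Fib : X → Type)
    [∀ x, NormedAddCommGroup (Fib x)] [∀ x, NormedSpace ℂ (Fib x)]
    [∀ x, CompleteSpace (Fib x)] : Type where
  /-- the topology on the total space `Σ x, Fib x` -/
  topTotal : TopologicalSpace ((x : X) × Fib x)
  /-- the projection is continuous -/
  continuous_proj : @Continuous ((x : X) × Fib x) X topTotal inferInstance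
    fun b => b.1
  /-- the projection is an open map -/
  isOpenMap_proj : @IsOpenMap ((x : X) × Fib x) X topTotal inferInstance
    fun b => b.1
  /-- (B1): the norm is upper semicontinuous on the total space -/
  isOpen_norm_lt : ∀ r : ℝ, @IsOpen ((x : X) × Fib x) topTotal { b | ‖b.2‖ < r }
  /-- (B2): addition is continuous on pairs lying in a common fibre -/
  continuous_add :
    @Continuous { q : ((x : X) × Fib x) × ((x : X) × Fib x) // q.1.1 = q.2.1 }
      ((x : X) × Fib x)
      (@instTopologicalSpaceSubtype _ _
        (@instTopologicalSpaceProd _ _ topTotal topTotal))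
      topTotal
      (fun q => ⟨q.1.1.1, q.1.1.2 + cast (congrArg Fib q.2.symm) q.1.2.2⟩)
  /-- (B3): scalar multiplication is continuous -/
  continuous_smul : ∀ c : ℂ,
    @Continuous ((x : X) × Fib x) ((x : X) × Fib x) topTotal topTotal
      fun b => ⟨b.1, c • b.2⟩
  /-- (B4): if `p (a i) → x` and `‖a i‖ → 0` then `a i → 0ₓ` (stated for filters,
  which is equivalent to the statement for nets) -/
  tendsto_zero : ∀ {ι : Type} (l : Filter ι) (a : ι → (x : X) × Fib x) (x : X),
    Filter.Tendsto (fun i => (a i).1) l (nhds x) →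
    Filter.Tendsto (fun i => ‖(a i).2‖) l (nhds (0 : ℝ)) →
    Filter.Tendsto a l (@nhds _ topTotal (⟨x, 0⟩ : (x : X) × Fib x))
  /-- the bundle has enough sections -/
  enough_sections : ∀ (x : X) (v : Fib x), ∃ f : ∀ y, Fib y,
    (@Continuous X ((x : X) × Fib x) inferInstance topTotal fun y => ⟨y, f y⟩) ∧
      f x = v

namespace USCBanachBundle

variable {X : Type} [TopologicalSpace X] {Fib : X → Type}
  [∀ x, NormedAddCommGroup (Fib x)] [∀ x, NormedSpace ℂ (Fib x)]
  [∀ x, CompleteSpace (Fib x)]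

/-- `f` is a continuous (global) section of the bundle `B`. -/
def IsContSection (B : USCBanachBundle X Fib) (f : ∀ x, Fib x) : Prop :=
  @Continuous X ((x : X) × Fib x) inferInstance B.topTotal fun x => ⟨x, f x⟩

/-- membership in `Γ_c(X;𝔅)`: continuous compactly supported sections. -/
def MemGammaC (B : USCBanachBundle X Fib) (f : ∀ x, Fib x) : Prop :=
  B.IsContSection f ∧ ∃ K : Set X, IsCompact K ∧ ∀ x ∉ K, f x = 0

/-- membership in `Γ₀(X;𝔅)`: continuous sections vanishing at infinity. -/
def MemGammaZero (B : USCBanachBundle X Fib) (f : ∀ x, Fib x) : Prop :=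
  B.IsContSection f ∧ ∀ ε : ℝ, 0 < ε → IsCompact { x | ε ≤ ‖f x‖ }

/-- The Banach space `Γ₀(X;𝔅)` is separable: there is a countable set of sections in
`Γ₀` which is dense for the supremum norm. -/
def SeparableGammaZero (B : USCBanachBundle X Fib) : Prop :=
  ∃ D : Set (∀ x, Fib x), D.Countable ∧ (∀ g ∈ D, B.MemGammaZero g) ∧
    ∀ f, B.MemGammaZero f → ∀ ε : ℝ, 0 < ε → ∃ g ∈ D, ∀ x, ‖f x - g x‖ < ε

/-- uniform convergence of a sequence of sections to a section. -/
def UnifTendsto (B : USCBanachBundle X Fib) (F : ℕ → ∀ x, Fib x)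
    (f : ∀ x, Fib x) : Prop :=
  ∀ ε : ℝ, 0 < ε → ∃ N : ℕ, ∀ n ≥ N, ∀ x, ‖F n x - f x‖ < ε

/-- continuity of `ν` in the inductive limit topology: `ν fₙ → ν f` whenever `fₙ → f`
uniformly with all supports contained in a fixed compact set. -/
def ILTContinuous (B : USCBanachBundle X Fib) (ν : (∀ x, Fib x) → ℂ) : Prop :=
  ∀ (F : ℕ → ∀ x, Fib x) (f : ∀ x, Fib x) (K : Set X),
    (∀ n, B.MemGammaC (F n)) → B.MemGammaC f → IsCompact K →
    (∀ n, ∀ x ∉ K, F n x = 0) → B.UnifTendsto F f →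
    Filter.Tendsto (fun n => ν (F n)) Filter.atTop (nhds (ν f))

/-- a generalized Radon measure on the bundle `B`: a linear functional on
`Γ_c(X;𝔅)` which is continuous in the inductive limit topology. -/
def IsGRM (B : USCBanachBundle X Fib) (ν : (∀ x, Fib x) → ℂ) : Prop :=
  (∀ f g, B.MemGammaC f → B.MemGammaC g →
    ν (fun x => f x + g x) = ν f + ν g) ∧
  (∀ (c : ℂ) (f), B.MemGammaC f → ν (fun x => c • f x) = c * ν f) ∧
  B.ILTContinuous ν

/-- `μ` is the total variation `|ν|` of the generalized Radon measure `ν`: a Radon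
measure (Borel measure, finite on compacts) such that for every nonnegative
`φ ∈ C_c(X)`, `∫ φ dμ = sup { |ν f| : f ∈ Γ_c(X;𝔅), ‖f x‖ ≤ φ x for all x }`. -/
def IsTotalVariation [MeasurableSpace X] (B : USCBanachBundle X Fib)
    (ν : (∀ x, Fib x) → ℂ) (μ : Measure X) : Prop :=
  (∀ K : Set X, IsCompact K → μ K < ⊤) ∧
  ∀ φ : X → ℝ, Continuous φ → HasCompactSupport φ → (∀ x, 0 ≤ φ x) →
    ∫ x, φ x ∂μ =
      sSup { r : ℝ | ∃ f, B.MemGammaC f ∧ (∀ x, ‖f x‖ ≤ φ x) ∧ r = ‖ν f‖ }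

/-- membership in `Σ_c(X;𝔅)`: bounded sections which are pointwise limits (in the
topology of the total space) of a uniformly bounded sequence in `Γ_c(X;𝔅)` whose
supports are contained in a fixed compact set. -/
def MemSigmaC (B : USCBanachBundle X Fib) (f : ∀ x, Fib x) : Prop :=
  (∃ M : ℝ, ∀ x, ‖f x‖ ≤ M) ∧
  ∃ (F : ℕ → ∀ x, Fib x) (K : Set X) (M : ℝ),
    (∀ n, B.MemGammaC (F n)) ∧ (∀ n x, ‖F n x‖ ≤ M) ∧ IsCompact K ∧
    (∀ n, ∀ x ∉ K, F n x = 0) ∧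
    ∀ x, Filter.Tendsto (fun n => (⟨x, F n x⟩ : (x : X) × Fib x)) Filter.atTop
      (@nhds _ B.topTotal (⟨x, f x⟩ : (x : X) × Fib x))

end USCBanachBundle


namespace USCBanachBundle

section Sections

variable {X : Type} [TopologicalSpace X] {Fib : X → Type}
  [∀ x, NormedAddCommGroup (Fib x)] [∀ x, NormedSpace ℂ (Fib x)]
  [∀ x, CompleteSpace (Fib x)] {B : USCBanachBundle X Fib}

lemma tendsto_add_aux (f g : ∀ x, Fib x) (x₀ : X) (a b : Fib x₀)
    (hf : Tendsto (fun x => (⟨x, f x⟩ : (x : X) × Fib x)) (𝓝 x₀)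
      (@nhds _ B.topTotal (⟨x₀, a⟩ : (x : X) × Fib x)))
    (hg : Tendsto (fun x => (⟨x, g x⟩ : (x : X) × Fib x)) (𝓝 x₀)
      (@nhds _ B.topTotal (⟨x₀, b⟩ : (x : X) × Fib x))) :
    Tendsto (fun x => (⟨x, f x + g x⟩ : (x : X) × Fib x)) (𝓝 x₀)
      (@nhds _ B.topTotal (⟨x₀, a + b⟩ : (x : X) × Fib x)) := by
  let _ := B.topTotal
  have h := B.continuous_add.tendsto
    (⟨(⟨x₀, a⟩, ⟨x₀, b⟩), rfl⟩ :
      { q : ((x : X) × Fib x) × ((x : X) × Fib x) // q.1.1 = q.2.1 })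
  have h2 : Tendsto (fun x => (⟨(⟨x, f x⟩, ⟨x, g x⟩), rfl⟩ :
      { q : ((x : X) × Fib x) × ((x : X) × Fib x) // q.1.1 = q.2.1 })) (𝓝 x₀)
      (𝓝 (⟨(⟨x₀, a⟩, ⟨x₀, b⟩), rfl⟩ :
      { q : ((x : X) × Fib x) × ((x : X) × Fib x) // q.1.1 = q.2.1 })) := by
    rw [tendsto_subtype_rng]
    exact hf.prodMk_nhds hg
  exact h.comp h2

lemma IsContSection.tendsto {f : ∀ x, Fib x} (hf : B.IsContSection f) (x₀ : X) :
    Tendsto (fun x => (⟨x, f x⟩ : (x : X) × Fib x)) (𝓝 x₀)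
      (@nhds _ B.topTotal (⟨x₀, f x₀⟩ : (x : X) × Fib x)) := by
  let _ := B.topTotal
  exact Continuous.tendsto hf x₀

lemma isContSection_of_tendsto {f : ∀ x, Fib x}
    (hf : ∀ x₀, Tendsto (fun x => (⟨x, f x⟩ : (x : X) × Fib x)) (𝓝 x₀)
      (@nhds _ B.topTotal (⟨x₀, f x₀⟩ : (x : X) × Fib x))) : B.IsContSection f := by
  let _ := B.topTotal
  exact continuous_iff_continuousAt.2 hf

lemma IsContSection.add {f g : ∀ x, Fib x} (hf : B.IsContSection f)
    (hg : B.IsContSection g) : B.IsContSection (fun x => f x + g x) :=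
  isContSection_of_tendsto fun x₀ => tendsto_add_aux f g x₀ _ _ (hf.tendsto x₀) (hg.tendsto x₀)

lemma IsContSection.isOpen_norm_lt {f : ∀ x, Fib x} (hf : B.IsContSection f) (r : ℝ) :
    IsOpen {x | ‖f x‖ < r} := by
  let _ := B.topTotal
  exact (B.isOpen_norm_lt r).preimage (f := fun x => (⟨x, f x⟩ : (x : X) × Fib x)) hf

lemma IsContSection.smul {f : ∀ x, Fib x} (hf : B.IsContSection f) {φ : X → ℂ}
    (hφ : Continuous φ) : B.IsContSection (fun x => φ x • f x) := by
  refine isContSection_of_tendsto fun x₀ => ?_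
  have h1 : Tendsto (fun x => (⟨x, φ x₀ • f x⟩ : (x : X) × Fib x)) (𝓝 x₀)
      (@nhds _ B.topTotal (⟨x₀, φ x₀ • f x₀⟩ : (x : X) × Fib x)) := by
    let _ := B.topTotal
    exact ((B.continuous_smul (φ x₀)).tendsto _).comp (hf.tendsto x₀)
  have h2 : Tendsto (fun x => (⟨x, (φ x - φ x₀) • f x⟩ : (x : X) × Fib x)) (𝓝 x₀)
      (@nhds _ B.topTotal (⟨x₀, 0⟩ : (x : X) × Fib x)) := by
    apply B.tendsto_zero
    · exact tendsto_id
    · have h3 : ∀ᶠ x in 𝓝 x₀, ‖f x‖ < ‖f x₀‖ + 1 :=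
        (hf.isOpen_norm_lt (‖f x₀‖ + 1)).mem_nhds (by simp)
      have h4 : Tendsto (fun x => ‖φ x - φ x₀‖ * (‖f x₀‖ + 1)) (𝓝 x₀) (𝓝 0) := by
        have : Continuous (fun x => ‖φ x - φ x₀‖ * (‖f x₀‖ + 1)) := by fun_prop
        simpa using this.tendsto x₀
      refine squeeze_zero' (Eventually.of_forall fun x => norm_nonneg _) ?_ h4
      filter_upwards [h3] with x hx
      simp only [norm_smul]
      gcongr
  have h := tendsto_add_aux _ _ x₀ _ _ h1 h2
  simp only [← add_smul, add_sub_cancel, add_zero] at h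
  exact h

lemma MemGammaC.add {f g : ∀ x, Fib x} (hf : B.MemGammaC f)
    (hg : B.MemGammaC g) : B.MemGammaC (fun x => f x + g x) := by
  obtain ⟨hf, K, hK, hK'⟩ := hf
  obtain ⟨hg, L, hL, hL'⟩ := hg
  refine ⟨hf.add hg, K ∪ L, hK.union hL, fun x hx => ?_⟩
  simp only [mem_union, not_or] at hx
  simp [hK' x hx.1, hL' x hx.2]

lemma MemGammaC.smul {f : ∀ x, Fib x} (hf : B.MemGammaC f) {φ : X → ℂ}
    (hφ : Continuous φ) : B.MemGammaC (fun x => φ x • f x) := by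
  obtain ⟨hf, K, hK, hK'⟩ := hf
  exact ⟨hf.smul hφ, K, hK, fun x hx => by simp [hK' x hx]⟩

lemma IsContSection.smul_memGammaC {f : ∀ x, Fib x} (hf : B.IsContSection f) {φ : X → ℂ}
    (hφ : Continuous φ) (hc : HasCompactSupport φ) : B.MemGammaC (fun x => φ x • f x) :=
  ⟨hf.smul hφ, tsupport φ, hc, fun x hx => by simp [image_eq_zero_of_notMem_tsupport hx]⟩

lemma isContSection_zero : B.IsContSection (fun _ => 0) :=
  isContSection_of_tendsto fun x₀ => B.tendsto_zero _ _ x₀ tendsto_id (by simp)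

lemma memGammaC_zero : B.MemGammaC (fun _ => 0) :=
  ⟨isContSection_zero, ∅, isCompact_empty, fun _ _ => rfl⟩

lemma memGammaC_sum {ι : Type} (s : Finset ι) (g : ι → ∀ x, Fib x)
    (hg : ∀ i, B.MemGammaC (g i)) (c : ι → ℂ) :
    B.MemGammaC (fun x => ∑ i ∈ s, c i • g i x) := by
  classical
  induction s using Finset.induction_on with
  | empty => simpa using memGammaC_zero
  | insert a s ha ih =>
    simp only [Finset.sum_insert ha]
    exact ((hg a).smul continuous_const).add ih

lemma MemGammaC.bounded {f : ∀ x, Fib x} (hf : B.MemGammaC f) :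
    ∃ M : ℝ, 0 ≤ M ∧ ∀ x, ‖f x‖ ≤ M := by
  obtain ⟨hf, K, hK, hK'⟩ := hf
  obtain ⟨n, hn⟩ := hK.elim_directed_cover (fun n : ℕ => {x | ‖f x‖ < n})
    (fun n => hf.isOpen_norm_lt n)
    (fun x _ => by
      obtain ⟨n, hn⟩ := exists_nat_gt ‖f x‖
      exact mem_iUnion.2 ⟨n, hn⟩)
    (Monotone.directed_le fun a b hab x hx => by
      have : (a : ℝ) ≤ b := by exact_mod_cast hab
      exact lt_of_lt_of_le hx this)
  refine ⟨n, by positivity, fun x => ?_⟩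
  by_cases hx : x ∈ K
  · exact (hn hx).le
  · simp [hK' x hx]

lemma MemGammaC.memGammaZero {f : ∀ x, Fib x} (hf : B.MemGammaC f) : B.MemGammaZero f := by
  obtain ⟨hf, K, hK, hK'⟩ := hf
  refine ⟨hf, fun ε hε => hK.of_isClosed_subset ?_ fun x hx => ?_⟩
  · have := (hf.isOpen_norm_lt ε).isClosed_compl
    convert this using 1
    ext x; simp
  · by_contra h
    simp [hK' x h] at hx
    linarith

/-- the fundamental bound by the total variation -/
lemma norm_le_integral [MeasurableSpace X] {ν : (∀ x, Fib x) → ℂ} (hν : B.IsGRM ν)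
    {μ : Measure X} (hμ : B.IsTotalVariation ν μ) {f : ∀ x, Fib x} (hf : B.MemGammaC f)
    {φ : X → ℝ} (hφ : Continuous φ) (hc : HasCompactSupport φ)
    (hle : ∀ x, ‖f x‖ ≤ φ x) : ‖ν f‖ ≤ ∫ x, φ x ∂μ := by
  rw [hμ.2 φ hφ hc fun x => (norm_nonneg _).trans (hle x)]
  refine le_csSup ?_ ⟨f, hf, hle, rfl⟩
  by_contra hb
  rw [not_bddAbove_iff] at hb
  choose r hr hr' using fun n : ℕ => hb (n + 1 : ℝ)
  choose F hF hFle hrF using hr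
  obtain ⟨M, hM⟩ : ∃ M, ∀ x, ‖φ x‖ ≤ M := hc.exists_bound_of_continuous hφ
  have h0 : ∀ n x, ‖F n x‖ ≤ M := fun n x =>
    (hFle n x).trans ((le_abs_self _).trans (hM x))
  have hMn : 0 ≤ |M| := abs_nonneg M
  let H : ℕ → ∀ x, Fib x := fun n x => ((n : ℂ) + 1)⁻¹ • F n x
  have hn1 : ∀ n : ℕ, ‖((n : ℂ) + 1)⁻¹‖ = ((n : ℝ) + 1)⁻¹ := fun n => by
    rw [norm_inv]
    congr 1
    have : ((n : ℂ) + 1) = ((n + 1 : ℕ) : ℂ) := by push_cast; rfl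
    rw [this, Complex.norm_natCast]; push_cast; rfl
  have hH : ∀ n, B.MemGammaC (H n) := fun n => (hF n).smul continuous_const
  have ht := hν.2.2 H (fun _ => 0) (tsupport φ) hH memGammaC_zero hc
    (fun n x hx => by
      have h1 := hFle n x
      rw [image_eq_zero_of_notMem_tsupport hx] at h1
      simp [H, norm_le_zero_iff.1 h1])
    (fun ε hε => by
      have h1 : Tendsto (fun n : ℕ => ((n : ℝ) + 1)⁻¹ * M) atTop (𝓝 0) := by
        have := (tendsto_one_div_add_atTop_nhds_zero_nat (𝕜 := ℝ)).mul_const M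
        simpa using this
      obtain ⟨N, hN⟩ := eventually_atTop.1 (h1.eventually (gt_mem_nhds hε))
      refine ⟨N, fun n hn x => lt_of_le_of_lt ?_ (hN n hn)⟩
      simp only [H, sub_zero, norm_smul, hn1]
      gcongr
      exact h0 n x)
  have hz : ν (fun _ => 0) = 0 := by
    have := hν.2.1 0 (fun _ => 0) memGammaC_zero
    simpa using this
  rw [hz] at ht
  have h1 : ∀ n, 1 ≤ ‖ν (H n)‖ := fun n => by
    rw [hν.2.1 _ _ (hF n), norm_mul, hn1, ← hrF n]
    have : (0 : ℝ) < n + 1 := by positivity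
    rw [inv_mul_eq_div, le_div_iff₀ this]
    linarith [hr' n]
  have h2 := ge_of_tendsto' ht.norm h1
  simp at h2
  linarith

end Sections

/-- A linear functional dominated by the norm of a linear map factors through it. -/
lemma exists_factor {M E : Type*} [AddCommGroup M] [Module ℂ M] [NormedAddCommGroup E]
    [NormedSpace ℂ E] (A : M →ₗ[ℂ] E) (L : M →ₗ[ℂ] ℂ) (C : ℝ) (hC : 0 ≤ C)
    (h : ∀ m, ‖L m‖ ≤ C * ‖A m‖) : ∃ F : E →L[ℂ] ℂ, ‖F‖ ≤ C ∧ ∀ m, F (A m) = L m := by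
  obtain ⟨s, hs⟩ := A.rangeRestrict.exists_rightInverse_of_surjective A.range_rangeRestrict
  have hs' : ∀ y, A.rangeRestrict (s y) = y := fun y => LinearMap.congr_fun hs y
  have hs'' : ∀ y, A (s y) = y := fun y => congrArg Subtype.val (hs' y)
  have hb : ∀ y, ‖(L ∘ₗ s) y‖ ≤ C * ‖y‖ := fun y => by
    have := h (s y)
    rw [hs''] at this
    exact this
  obtain ⟨F, hF, hFn⟩ := exists_extension_norm_eq (LinearMap.range A)
    ((L ∘ₗ s).mkContinuous C hb)
  refine ⟨F, hFn.le.trans (LinearMap.mkContinuous_norm_le _ hC _), fun m => ?_⟩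
  have h1 := hF (A.rangeRestrict m)
  rw [LinearMap.mkContinuous_apply] at h1
  have h2 : L (s (A.rangeRestrict m) - m) = 0 := by
    have := h (s (A.rangeRestrict m) - m)
    rw [map_sub A, hs''] at this
    simpa using this
  rw [map_sub, sub_eq_zero] at h2
  exact h1.trans h2

section Density

open CompactlySupported

variable {G : Type} [TopologicalSpace G] [SecondCountableTopology G]
    [LocallyCompactSpace G] [T2Space G]
    [MeasurableSpace G] [BorelSpace G]
    {Fib : G → Type}
    [∀ x, NormedAddCommGroup (Fib x)] [∀ x, NormedSpace ℂ (Fib x)]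
    [∀ x, CompleteSpace (Fib x)]
    {B : USCBanachBundle G Fib}

lemma exists_density {ν : (∀ x, Fib x) → ℂ} (hν : B.IsGRM ν)
    {μ : Measure G} [IsFiniteMeasureOnCompacts μ]
    (hμ : B.IsTotalVariation ν μ) {f : ∀ x, Fib x} (hf : B.MemGammaC f) :
    ∃ h : G → ℂ, Measurable h ∧ LocallyIntegrable h μ ∧
      ∀ φ : G → ℂ, Continuous φ → HasCompactSupport φ →
        ν (fun x => φ x • f x) = ∫ x, φ x * h x ∂μ := by
  have hmem : ∀ φ : C_c(G, ℂ), MemLp φ 2 μ := fun φ =>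
    φ.continuous.memLp_of_hasCompactSupport φ.hasCompactSupport
  have hcont : ∀ φ : C_c(G, ℂ), Continuous (fun x => φ x) := fun φ => φ.continuous
  let A : C_c(G, ℂ) →ₗ[ℂ] Lp ℂ 2 μ :=
    { toFun := fun φ => (hmem φ).toLp φ
      map_add' := fun φ ψ => MemLp.toLp_add (hmem φ) (hmem ψ)
      map_smul' := fun c φ => MemLp.toLp_const_smul c (hmem φ) }
  let L : C_c(G, ℂ) →ₗ[ℂ] ℂ :=
    { toFun := fun φ => ν (fun x => φ x • f x)
      map_add' := fun φ ψ => by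
        rw [← hν.1 _ _ (hf.smul (hcont φ)) (hf.smul (hcont ψ))]
        congr 1; ext x; simp [add_smul]
      map_smul' := fun c φ => by
        simp only [RingHom.id_apply, smul_eq_mul]
        rw [← hν.2.1 c _ (hf.smul (hcont φ))]
        congr 1; ext x; simp [mul_smul] }
  obtain ⟨M, hM0, hM⟩ := hf.bounded
  obtain ⟨K, hK, hK'⟩ := hf.2
  obtain ⟨ψ, hψ1, -, hψc, hψr⟩ := exists_continuous_one_zero_of_isCompact hK
    (isClosed_empty (X := G)) (disjoint_empty K)
  have hψm : MemLp ψ 2 μ := ψ.continuous.memLp_of_hasCompactSupport hψc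
  set C : ℝ := M * (∫ x, ψ x ^ (2 : ℝ) ∂μ) ^ (1 / (2 : ℝ)) with hC
  have hC0 : 0 ≤ C := mul_nonneg hM0 (Real.rpow_nonneg
    (integral_nonneg fun x => Real.rpow_nonneg (hψr x).1 _) _)
  have hbound : ∀ φ, ‖L φ‖ ≤ C * ‖A φ‖ := fun φ => by
    have h1 : ‖L φ‖ ≤ ∫ x, M * (ψ x * ‖φ x‖) ∂μ := by
      refine norm_le_integral hν hμ (hf.smul (hcont φ)) ?_ ?_ ?_
      · have := hcont φ
        fun_prop
      · exact (hψc.mul_right).mul_left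
      · intro x
        by_cases hx : x ∈ K
        · rw [hψ1 hx, norm_smul, Pi.one_apply, one_mul, mul_comm]
          gcongr
          exact hM x
        · rw [hK' x hx, smul_zero, norm_zero]
          have := (hψr x).1
          positivity
    refine h1.trans ?_
    rw [integral_const_mul, hC, mul_assoc]
    gcongr
    have h2 := integral_mul_le_Lp_mul_Lq_of_nonneg (μ := μ) (f := ψ) (g := fun x => ‖φ x‖)
      (Real.HolderConjugate.two_two) (Eventually.of_forall fun x => (hψr x).1)
      (Eventually.of_forall fun x => norm_nonneg _) (by simpa using hψm)
      (by simpa using (hmem φ).norm)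
    refine h2.trans (le_of_eq ?_)
    congr 1
    change _ = ‖(hmem φ).toLp φ‖
    rw [Lp.norm_toLp, (hmem φ).eLpNorm_eq_integral_rpow_norm (by simp) (by simp),
      ENNReal.toReal_ofReal (Real.rpow_nonneg (integral_nonneg
        fun x => Real.rpow_nonneg (norm_nonneg _) _) _)]
    simp
  obtain ⟨F, -, hF⟩ := exists_factor A L C hC0 hbound
  let u : Lp ℂ 2 μ := (InnerProductSpace.toDual ℂ (Lp ℂ 2 μ)).symm F
  refine ⟨fun x => (starRingEnd ℂ) (u x), ?_, ?_, ?_⟩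
  · exact Complex.continuous_conj.measurable.comp (Lp.stronglyMeasurable u).measurable
  · have : LocallyIntegrable (u : G → ℂ) μ := (Lp.memLp u).locallyIntegrable (by norm_num)
    intro x
    obtain ⟨s, hs, hi⟩ := this x
    refine ⟨s, hs, ?_⟩
    have h3 : IntegrableOn (fun x => Complex.conjCLE (u x)) s μ :=
      Complex.conjCLE.toContinuousLinearMap.integrable_comp hi
    exact h3
  · intro φ hφ hc
    let φ' : C_c(G, ℂ) := ⟨⟨φ, hφ⟩, hc⟩
    have h1 := hF φ'
    have h2 : F (A φ') = inner ℂ u (A φ') := (InnerProductSpace.toDual_symm_apply).symm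
    change ν (fun x => φ' x • f x) = _
    change _ = L φ' at h1
    change L φ' = _
    rw [← h1, h2, L2.inner_def]
    refine integral_congr_ae ?_
    filter_upwards [(hmem φ').coeFn_toLp] with x hx
    change inner ℂ (u x) (((hmem φ').toLp φ') x) = _
    rw [hx]
    simp only [RCLike.inner_apply]
    rfl

lemma norm_density_le {ν : (∀ x, Fib x) → ℂ} (hν : B.IsGRM ν)
    {μ : Measure G} [IsFiniteMeasureOnCompacts μ]
    (hμ : B.IsTotalVariation ν μ) {f : ∀ x, Fib x} (hf : B.MemGammaC f)
    {h : G → ℂ} (hm : Measurable h) (hi : LocallyIntegrable h μ)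
    (hh : ∀ φ : G → ℂ, Continuous φ → HasCompactSupport φ →
        ν (fun x => φ x • f x) = ∫ x, φ x * h x ∂μ) :
    ∀ᵐ x ∂μ, ‖h x‖ ≤ ‖f x‖ := by
  let _ := TopologicalSpace.metrizableSpaceMetric G
  have key : ∀ r : ℝ, 0 ≤ r → ∀ K : Set G, IsCompact K → K ⊆ {x | ‖f x‖ < r} →
      ‖∫ x in K, h x ∂μ‖ ≤ r * μ.real K := by
    intro r hr K hK hKU
    obtain ⟨φ, hφK, hφ0, hφc, hφr⟩ := exists_continuous_one_zero_of_isCompact_of_isGδ hK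
      hK.isClosed.isGδ (hf.1.isOpen_norm_lt r).isClosed_compl
      (disjoint_compl_right_iff_subset.2 hKU)
    have hlim : ∀ x, Tendsto (fun n : ℕ => φ x ^ (n + 1)) atTop
        (𝓝 (K.indicator (fun _ => (1 : ℝ)) x)) := by
      intro x
      by_cases hx : x ∈ K
      · have : φ x = 1 := by rw [hφK] at hx; exact hx
        simp [hx, this]
      · have : φ x ≠ 1 := by rw [hφK] at hx; exact hx
        simp only [hx, not_false_eq_true, indicator_of_notMem]
        exact (tendsto_pow_atTop_nhds_zero_of_lt_one (hφr x).1
          (lt_of_le_of_ne (hφr x).2 this)).comp (tendsto_add_atTop_nat 1)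
    have hple : ∀ n x, φ x ^ (n + 1) ≤ φ x := fun n x =>
      pow_le_of_le_one (hφr x).1 (hφr x).2 (by simp)
    have hpn : ∀ n x, 0 ≤ φ x ^ (n + 1) := fun n x => pow_nonneg (hφr x).1 _
    have hpc : ∀ n, HasCompactSupport (fun x => φ x ^ (n + 1)) := fun n =>
      hφc.comp_left (g := fun t : ℝ => t ^ (n + 1)) (by simp)
    have hpcc : ∀ n, HasCompactSupport (fun x => ((φ x ^ (n + 1) : ℝ) : ℂ)) := fun n =>
      (hpc n).comp_left (g := fun t : ℝ => (t : ℂ)) (by simp)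
    have hpct : ∀ n, Continuous (fun x => φ x ^ (n + 1)) := fun n => by fun_prop
    have hpctc : ∀ n, Continuous (fun x => ((φ x ^ (n + 1) : ℝ) : ℂ)) := fun n =>
      Complex.continuous_ofReal.comp (hpct n)
    have hle : ∀ n, ‖∫ x, ((φ x ^ (n + 1) : ℝ) : ℂ) * h x ∂μ‖
        ≤ r * ∫ x, φ x ^ (n + 1) ∂μ := by
      intro n
      rw [← hh _ (hpctc n) (hpcc n), ← integral_const_mul]
      refine norm_le_integral hν hμ (hf.smul (hpctc n)) (by fun_prop) (hpc n).mul_left ?_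
      intro x
      rw [norm_smul, Complex.norm_real, Real.norm_of_nonneg (hpn n x)]
      by_cases hx : ‖f x‖ < r
      · rw [mul_comm]
        exact mul_le_mul_of_nonneg_right hx.le (hpn n x)
      · have : φ x = 0 := hφ0 hx
        simp [this]
    have hφi : Integrable φ μ := φ.continuous.integrable_of_hasCompactSupport hφc
    have hφhi : Integrable (fun x => φ x * ‖h x‖) μ := by
      have := (hi.integrable_smul_left_of_hasCompactSupport φ.continuous hφc).norm
      refine this.congr (Eventually.of_forall fun x => ?_)
      simp only [norm_smul, Real.norm_of_nonneg (hφr x).1]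
    have t1 : Tendsto (fun n => ∫ x, φ x ^ (n + 1) ∂μ) atTop
        (𝓝 (∫ x, K.indicator (fun _ => (1 : ℝ)) x ∂μ)) := by
      refine tendsto_integral_of_dominated_convergence φ
        (fun n => (hpct n).aestronglyMeasurable) hφi ?_ (Eventually.of_forall hlim)
      intro n
      refine Eventually.of_forall fun x => ?_
      rw [Real.norm_of_nonneg (hpn n x)]
      exact hple n x
    have t2 : Tendsto (fun n => ∫ x, ((φ x ^ (n + 1) : ℝ) : ℂ) * h x ∂μ) atTop
        (𝓝 (∫ x, K.indicator h x ∂μ)) := by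
      refine tendsto_integral_of_dominated_convergence (fun x => φ x * ‖h x‖)
        (fun n => ((hpctc n).measurable.mul hm).aestronglyMeasurable) hφhi ?_ ?_
      · intro n
        refine Eventually.of_forall fun x => ?_
        rw [norm_mul, Complex.norm_real, Real.norm_of_nonneg (hpn n x)]
        exact mul_le_mul_of_nonneg_right (hple n x) (norm_nonneg _)
      · refine Eventually.of_forall fun x => ?_
        have h1 := ((Complex.continuous_ofReal.tendsto _).comp (hlim x)).mul_const (h x)
        have e : K.indicator h x = ((K.indicator (fun _ => (1 : ℝ)) x : ℝ) : ℂ) * h x := by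
          by_cases hx : x ∈ K <;> simp [hx]
        rw [e]
        exact h1
    have h3 := le_of_tendsto_of_tendsto' t2.norm (t1.const_mul r) hle
    rw [integral_indicator hK.measurableSet, integral_indicator hK.measurableSet] at h3
    simpa using h3
  have key2 : ∀ r : ℝ, 0 ≤ r → ∀ c : ℂ,
      ∀ᵐ x ∂μ, ‖f x‖ < r → (c * h x).re ≤ r * ‖c‖ := by
    intro r hr c
    by_contra hcon
    have hmeas : MeasurableSet ({x | ‖f x‖ < r} ∩ {x | r * ‖c‖ < (c * h x).re}) :=
      (hf.1.isOpen_norm_lt r).measurableSet.inter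
        (measurableSet_lt measurable_const
          (Complex.measurable_re.comp (measurable_const.mul hm)))
    have hpos : 0 < μ ({x | ‖f x‖ < r} ∩ {x | r * ‖c‖ < (c * h x).re}) := by
      rw [pos_iff_ne_zero]
      intro h0
      apply hcon
      rw [ae_iff]
      convert h0 using 2
      ext x; simp only [mem_inter_iff, mem_ofPred_eq, Classical.not_imp, not_le]
    obtain ⟨K, hKs, hK, hKpos⟩ := hmeas.exists_lt_isCompact hpos
    have hKi : IntegrableOn h K μ := hi.integrableOn_isCompact hK
    have hKfin : μ K < ⊤ := hK.measure_lt_top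
    have hci : IntegrableOn (fun x => c * h x) K μ := hKi.const_mul c
    have hre : IntegrableOn (fun x => (c * h x).re) K μ := Complex.reCLM.integrable_comp hci
    have hIntg : IntegrableOn (fun x => (c * h x).re - r * ‖c‖) K μ :=
      (Complex.reCLM.integrable_comp hci).sub (integrableOn_const hKfin.ne)
    have h1 : 0 < ∫ x in K, ((c * h x).re - r * ‖c‖) ∂μ := by
      rw [setIntegral_pos_iff_support_of_nonneg_ae _ hIntg]
      · refine lt_of_lt_of_le hKpos (measure_mono fun x hx => ⟨?_, hx⟩)
        have := (hKs hx).2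
        simp only [mem_ofPred_eq] at this
        simp only [Function.mem_support]
        linarith
      · refine (ae_restrict_iff' hK.measurableSet).2 (Eventually.of_forall fun x hx => ?_)
        have := (hKs hx).2
        simp only [mem_ofPred_eq] at this
        simp only [Pi.zero_apply]
        linarith
    rw [integral_sub hre (integrableOn_const hKfin.ne)] at h1
    have h2 : ∫ x in K, (c * h x).re ∂μ = (c * ∫ x in K, h x ∂μ).re := by
      rw [← integral_const_mul]
      exact Complex.reCLM.integral_comp_comm hci
    have h3 : (c * ∫ x in K, h x ∂μ).re ≤ ‖c‖ * (r * μ.real K) := by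
      refine (Complex.re_le_norm _).trans ?_
      rw [norm_mul]
      gcongr
      exact key r hr K hK fun x hx => (hKs hx).1
    simp only [integral_const, smul_eq_mul, measureReal_restrict_apply_univ] at h1
    change 0 < (∫ x in K, (c * h x).re ∂μ) - _ at h1
    rw [h2] at h1
    nlinarith
  have key3 : ∀ᵐ x ∂μ, ∀ r : ℚ, 0 ≤ r → ∀ n : ℕ, ‖f x‖ < r →
      (TopologicalSpace.denseSeq ℂ n * h x).re ≤ r * ‖TopologicalSpace.denseSeq ℂ n‖ := by
    rw [ae_all_iff]; intro r
    by_cases hr : 0 ≤ r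
    · simp only [hr, true_imp_iff]
      rw [ae_all_iff]; intro n
      exact key2 r (by exact_mod_cast hr) _
    · simp [hr]
  filter_upwards [key3] with x hx
  refine le_of_forall_gt_imp_ge_of_dense fun a ha => ?_
  obtain ⟨r, hr1, hr2⟩ := exists_rat_btwn ha
  refine le_trans ?_ hr2.le
  have hr0 : (0 : ℝ) ≤ r := (norm_nonneg _).trans hr1.le
  have h1 : ∀ c : ℂ, (c * h x).re ≤ r * ‖c‖ := by
    have hcl : IsClosed {c : ℂ | (c * h x).re ≤ r * ‖c‖} :=
      isClosed_le (by fun_prop) (by fun_prop)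
    have hd := TopologicalSpace.denseRange_denseSeq ℂ
    intro c
    have : closure (range (TopologicalSpace.denseSeq ℂ)) ⊆ {c : ℂ | (c * h x).re ≤ r * ‖c‖} :=
      hcl.closure_subset_iff.2 (by
        rintro _ ⟨n, rfl⟩
        exact hx r (by exact_mod_cast hr0) n hr1)
    exact this (hd c)
  have h2 := h1 ((starRingEnd ℂ) (h x))
  rw [← Complex.normSq_eq_conj_mul_self, Complex.ofReal_re, Complex.normSq_eq_norm_sq,
    RCLike.norm_conj] at h2
  by_contra hlt
  push Not at hlt
  nlinarith

end Density

section Main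

variable {G : Type} [TopologicalSpace G] [SecondCountableTopology G]
    [LocallyCompactSpace G] [T2Space G]
    [MeasurableSpace G] [BorelSpace G]
    {Fib : G → Type}
    [∀ x, NormedAddCommGroup (Fib x)] [∀ x, NormedSpace ℂ (Fib x)]
    [∀ x, CompleteSpace (Fib x)]
    {B : USCBanachBundle G Fib}

lemma nu_zero {ν : (∀ x, Fib x) → ℂ} (hν : B.IsGRM ν) : ν (fun _ => 0) = 0 := by
  have := hν.2.1 0 (fun _ => 0) memGammaC_zero
  simpa using this

lemma density_sum {ν : (∀ x, Fib x) → ℂ} (hν : B.IsGRM ν)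
    {μ : Measure G} [IsFiniteMeasureOnCompacts μ]
    {ι : Type} (s : Finset ι) (g : ι → ∀ x, Fib x) (hg : ∀ i, B.MemGammaC (g i))
    (h : ι → G → ℂ) (hm : ∀ i, Measurable (h i)) (hi : ∀ i, LocallyIntegrable (h i) μ)
    (hh : ∀ i, ∀ φ : G → ℂ, Continuous φ → HasCompactSupport φ →
        ν (fun x => φ x • g i x) = ∫ x, φ x * h i x ∂μ) (c : ι → ℂ) :
    Measurable (fun x => ∑ i ∈ s, c i * h i x) ∧
    LocallyIntegrable (fun x => ∑ i ∈ s, c i * h i x) μ ∧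
    ∀ φ : G → ℂ, Continuous φ → HasCompactSupport φ →
      ν (fun x => φ x • ∑ i ∈ s, c i • g i x) = ∫ x, φ x * ∑ i ∈ s, c i * h i x ∂μ := by
  classical
  induction s using Finset.induction_on with
  | empty =>
    refine ⟨by simp, by simpa using locallyIntegrable_zero, fun φ _ _ => ?_⟩
    simpa using nu_zero hν
  | insert a s ha ih =>
    obtain ⟨i1, i2, i3⟩ := ih
    have hl : LocallyIntegrable (fun x => c a * h a x) μ := (hi a).smul (c a)
    simp only [Finset.sum_insert ha]
    refine ⟨((hm a).const_mul (c a)).add i1, hl.add i2, fun φ hφ hc => ?_⟩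
    have e : (fun x => φ x • (c a • g a x + ∑ i ∈ s, c i • g i x)) =
        fun x => c a • φ x • g a x + φ x • ∑ i ∈ s, c i • g i x := by
      ext x
      rw [smul_add, smul_comm]
    have h1 : Integrable (fun x => φ x * (c a * h a x)) μ :=
      hl.integrable_smul_left_of_hasCompactSupport hφ hc
    have h2 : Integrable (fun x => φ x * ∑ i ∈ s, c i * h i x) μ :=
      i2.integrable_smul_left_of_hasCompactSupport hφ hc
    have h3 : B.MemGammaC (fun x => c a • φ x • g a x) :=
      ((hg a).smul hφ).smul continuous_const
    rw [e, hν.1 _ _ h3 ((memGammaC_sum s g hg c).smul hφ), hν.2.1 _ _ ((hg a).smul hφ),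
      hh a φ hφ hc, i3 φ hφ hc, ← integral_const_mul]
    simp only [mul_add]
    rw [integral_add h1 h2]
    congr 1
    refine integral_congr_ae (Eventually.of_forall fun x => ?_)
    simp only
    ring

lemma nu_sub {ν : (∀ x, Fib x) → ℂ} (hν : B.IsGRM ν) {f g : ∀ x, Fib x}
    (hf : B.MemGammaC f) (hg : B.MemGammaC g) :
    B.MemGammaC (fun x => f x - g x) ∧ ν (fun x => f x - g x) = ν f - ν g := by
  have e : (fun x => f x - g x) = fun x => f x + (-1 : ℂ) • g x := by
    ext x; simp [sub_eq_add_neg]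
  have h1 : B.MemGammaC (fun x => (-1 : ℂ) • g x) := hg.smul continuous_const
  rw [e]
  refine ⟨hf.add h1, ?_⟩
  rw [hν.1 _ _ hf h1, hν.2.1 _ _ hg]
  ring

/-- Countable approximating family of compactly supported sections. -/
lemma exists_countable_family (hsep : B.SeparableGammaZero) :
    ∃ (ι : Type) (_ : Countable ι) (g : ι → ∀ x, Fib x), (∀ i, B.MemGammaC (g i)) ∧
      ∀ f, B.MemGammaC f → ∀ δ : ℝ, 0 < δ → ∃ i, ∀ x, ‖f x - g i x‖ < δ := by
  obtain ⟨D, hDc, hDm, hDd⟩ := hsep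
  have : Countable D := hDc.to_subtype
  let CE : CompactExhaustion G := default
  choose ψ hψ1 _ hψc hψr using fun n : ℕ => exists_continuous_one_zero_of_isCompact
    (CE.isCompact n) (isClosed_empty (X := G)) (disjoint_empty (CE n))
  have hc : ∀ n, Continuous (fun x => (ψ n x : ℂ)) := fun n => by fun_prop
  refine ⟨D × ℕ, inferInstance, fun i x => (ψ i.2 x : ℂ) • i.1.1 x, fun i => ?_, ?_⟩
  · exact (hDm i.1.1 i.1.2).1.smul_memGammaC (hc i.2)
      ((hψc i.2).comp_left (g := fun t : ℝ => (t : ℂ)) (by simp))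
  · intro f hf δ hδ
    obtain ⟨d, hd, hfd⟩ := hDd f hf.memGammaZero δ hδ
    obtain ⟨K, hK, hK'⟩ := hf.2
    obtain ⟨n, hn⟩ := CE.exists_superset_of_isCompact hK
    refine ⟨(⟨d, hd⟩, n), fun x => ?_⟩
    have e : f x - (ψ n x : ℂ) • d x = (ψ n x : ℂ) • (f x - d x) := by
      by_cases hx : x ∈ K
      · have : ψ n x = 1 := hψ1 n (hn hx)
        simp [this]
      · simp [hK' x hx]
    simp only [e, norm_smul, Complex.norm_real, Real.norm_of_nonneg (hψr n x).1]
    exact lt_of_le_of_lt (mul_le_of_le_one_left (norm_nonneg _) (hψr n x).2) (hfd x)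

end Main

end USCBanachBundle

/-- Proposition 3.3 of the paper, Dinculeanu-type disintegration: if
`Γ₀(G;𝔅)` is separable and `ν` is a generalized Radon measure with total variation
`|ν| = μν`, then there are functionals `ε_x ∈ B(x)*` of norm at most one such that
`x ↦ ε_x (f x)` is a bounded Borel function vanishing off a compact set for every
`f ∈ Γ_c(G;𝔅)`, and `ν f = ∫ ε_x (f x) d|ν|(x)` for all such `f`. -/
theorem USCBanachBundle.exists_disintegration_of_grm
    {G : Type} [TopologicalSpace G] [SecondCountableTopology G]
    [LocallyCompactSpace G] [T2Space G]
    [MeasurableSpace G] [BorelSpace G]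
    {Fib : G → Type}
    [∀ x, NormedAddCommGroup (Fib x)] [∀ x, NormedSpace ℂ (Fib x)]
    [∀ x, CompleteSpace (Fib x)]
    (B : USCBanachBundle G Fib)
    (hsep : B.SeparableGammaZero)
    (ν : (∀ x, Fib x) → ℂ) (hν : B.IsGRM ν)
    (μν : Measure G) (hμν : B.IsTotalVariation ν μν) :
    ∃ ε : (x : G) → (Fib x →L[ℂ] ℂ),
      (∀ x, ‖ε x‖ ≤ 1) ∧
      (∀ f, B.MemGammaC f →
        Measurable (fun x => ε x (f x)) ∧
        (∃ M : ℝ, ∀ x, ‖ε x (f x)‖ ≤ M) ∧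
        (∃ K : Set G, IsCompact K ∧ ∀ x ∉ K, ε x (f x) = 0)) ∧
      (∀ f, B.MemGammaC f → ν f = ∫ x, ε x (f x) ∂μν) := by
  have : IsFiniteMeasureOnCompacts μν := ⟨fun K hK => hμν.1 K hK⟩
  obtain ⟨ι, hι, g, hg, happ⟩ := exists_countable_family hsep
  choose h hm hi hh using fun i => exists_density hν hμν (hg i)
  have hae : ∀ᵐ x ∂μν, ∀ (s : Finset ι) (n : ℕ),
      ‖∑ i ∈ s, TopologicalSpace.denseSeq (ι → ℂ) n i * h i x‖ ≤
        ‖∑ i ∈ s, TopologicalSpace.denseSeq (ι → ℂ) n i • g i x‖ := by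
    rw [ae_all_iff]; intro s
    rw [ae_all_iff]; intro n
    obtain ⟨h1, h2, h3⟩ := density_sum hν s g hg h hm hi hh
      (TopologicalSpace.denseSeq (ι → ℂ) n)
    exact norm_density_le hν hμν (memGammaC_sum s g hg _) h1 h2 h3
  let N : Set G := toMeasurable μν {x | ¬ ∀ (s : Finset ι) (n : ℕ),
      ‖∑ i ∈ s, TopologicalSpace.denseSeq (ι → ℂ) n i * h i x‖ ≤
        ‖∑ i ∈ s, TopologicalSpace.denseSeq (ι → ℂ) n i • g i x‖}
  have hNm : MeasurableSet N := measurableSet_toMeasurable _ _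
  have hN0 : μν N = 0 := (measure_toMeasurable _).trans (ae_iff.1 hae)
  have hNot : ∀ x ∉ N, ∃ F : Fib x →L[ℂ] ℂ, ‖F‖ ≤ 1 ∧ ∀ i, F (g i x) = h i x := by
    intro x hx
    have hx1 : ∀ (s : Finset ι) (n : ℕ),
      ‖∑ i ∈ s, TopologicalSpace.denseSeq (ι → ℂ) n i * h i x‖ ≤
        ‖∑ i ∈ s, TopologicalSpace.denseSeq (ι → ℂ) n i • g i x‖ := by
      by_contra hcon
      exact hx (subset_toMeasurable μν _ hcon)
    have hx2 : ∀ (s : Finset ι) (c : ι → ℂ),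
        ‖∑ i ∈ s, c i * h i x‖ ≤ ‖∑ i ∈ s, c i • g i x‖ := by
      intro s c
      have hcl : IsClosed {c : ι → ℂ | ‖∑ i ∈ s, c i * h i x‖ ≤ ‖∑ i ∈ s, c i • g i x‖} :=
        isClosed_le (by fun_prop) (by fun_prop)
      have hsub : closure (range (TopologicalSpace.denseSeq (ι → ℂ))) ⊆
          {c : ι → ℂ | ‖∑ i ∈ s, c i * h i x‖ ≤ ‖∑ i ∈ s, c i • g i x‖} :=
        hcl.closure_subset_iff.2 (by
          rintro _ ⟨n, rfl⟩
          exact hx1 s n)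
      exact hsub (TopologicalSpace.denseRange_denseSeq (ι → ℂ) c)
    obtain ⟨F, hF1, hF2⟩ := exists_factor (Finsupp.linearCombination ℂ (fun i => g i x))
      (Finsupp.linearCombination ℂ (fun i => h i x)) 1 zero_le_one (fun c => by
        rw [one_mul, Finsupp.linearCombination_apply, Finsupp.linearCombination_apply]
        exact hx2 c.support c)
    refine ⟨F, hF1, fun i => ?_⟩
    have := hF2 (Finsupp.single i 1)
    simpa using this
  have hex : ∀ x, ∃ F : Fib x →L[ℂ] ℂ, ‖F‖ ≤ 1 ∧
      ∀ i, F (g i x) = Nᶜ.indicator (h i) x := by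
    intro x
    by_cases hx : x ∈ N
    · exact ⟨0, by simp, fun i => by simp [hx]⟩
    · obtain ⟨F, hF1, hF2⟩ := hNot x hx
      exact ⟨F, hF1, fun i => by simp [hx, hF2]⟩
  choose ε hε1 hε2 using hex
  have hle : ∀ x (v : Fib x), ‖ε x v‖ ≤ ‖v‖ := fun x v =>
    ((ε x).le_of_opNorm_le (hε1 x) v).trans (by simp)
  have hgm : ∀ i, Measurable (fun x => ε x (g i x)) := fun i => by
    simp only [hε2]
    exact (hm i).indicator hNm.compl
  have hmeas : ∀ f, B.MemGammaC f → Measurable (fun x => ε x (f x)) := by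
    intro f hf
    choose i hif using fun n : ℕ => happ f hf (1 / ((n : ℝ) + 1)) (by positivity)
    refine measurable_of_tendsto_metrizable (fun n => hgm (i n)) ?_
    rw [tendsto_pi_nhds]
    intro x
    rw [tendsto_iff_norm_sub_tendsto_zero]
    refine squeeze_zero (fun n => norm_nonneg _) (fun n => ?_)
      (tendsto_one_div_add_atTop_nhds_zero_nat (𝕜 := ℝ))
    rw [norm_sub_rev, ← map_sub]
    exact (hle x _).trans (hif n x).le
  refine ⟨ε, hε1, fun f hf => ⟨hmeas f hf, ?_, ?_⟩, fun f hf => ?_⟩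
  · obtain ⟨M, -, hM⟩ := hf.bounded
    exact ⟨M, fun x => (hle x _).trans (hM x)⟩
  · obtain ⟨K, hK, hK'⟩ := hf.2
    exact ⟨K, hK, fun x hx => by simp [hK' x hx]⟩
  · obtain ⟨K, hK, hK'⟩ := hf.2
    obtain ⟨ψ, hψ1, -, hψc, hψr⟩ := exists_continuous_one_zero_of_isCompact hK
      (isClosed_empty (X := G)) (disjoint_empty K)
    have hψi : Integrable ψ μν := ψ.continuous.integrable_of_hasCompactSupport hψc
    have hψt : Continuous (fun x => (ψ x : ℂ)) := by fun_prop
    have hψtc : HasCompactSupport (fun x => (ψ x : ℂ)) :=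
      hψc.comp_left (g := fun t : ℝ => (t : ℂ)) (by simp)
    have hψf : ∀ x, (ψ x : ℂ) • f x = f x := fun x => by
      by_cases hx : x ∈ K
      · have : ψ x = 1 := hψ1 hx
        simp [this]
      · simp [hK' x hx]
    have hIntg : ∀ f', B.MemGammaC f' → Integrable (fun x => (ψ x : ℂ) * ε x (f' x)) μν := by
      intro f' hf'
      obtain ⟨M, hM0, hM⟩ := hf'.bounded
      refine (hψi.mul_const M).mono'
        (hψt.measurable.mul (hmeas f' hf')).aestronglyMeasurable
        (Eventually.of_forall fun x => ?_)
      rw [norm_mul, Complex.norm_real, Real.norm_of_nonneg (hψr x).1]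
      exact mul_le_mul_of_nonneg_left ((hle x _).trans (hM x)) (hψr x).1
    have hI0 : 0 ≤ ∫ x, ψ x ∂μν := integral_nonneg fun x => (hψr x).1
    have hbd : ∀ δ : ℝ, 0 < δ → ‖ν f - ∫ x, ε x (f x) ∂μν‖ ≤ δ * (2 * ∫ x, ψ x ∂μν) := by
      intro δ hδ
      obtain ⟨i, hif⟩ := happ f hf δ hδ
      obtain ⟨hd, hd'⟩ := nu_sub hν hf ((hg i).smul hψt)
      have e : ∀ x, f x - (ψ x : ℂ) • g i x = (ψ x : ℂ) • (f x - g i x) := fun x => by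
        rw [smul_sub, hψf]
      have h1 : ‖ν f - ν (fun x => (ψ x : ℂ) • g i x)‖ ≤ δ * ∫ x, ψ x ∂μν := by
        rw [← hd', ← integral_const_mul]
        refine norm_le_integral hν hμν hd (by fun_prop) hψc.mul_left fun x => ?_
        rw [e, norm_smul, Complex.norm_real, Real.norm_of_nonneg (hψr x).1, mul_comm]
        exact mul_le_mul_of_nonneg_right (hif x).le (hψr x).1
      have h2 : ν (fun x => (ψ x : ℂ) • g i x) = ∫ x, (ψ x : ℂ) * ε x (g i x) ∂μν := by
        rw [hh i _ hψt hψtc]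
        refine integral_congr_ae ?_
        filter_upwards [compl_mem_ae_iff.2 hN0] with x hx
        rw [hε2, indicator_of_mem hx]
      have h3 : ∫ x, ε x (f x) ∂μν = ∫ x, (ψ x : ℂ) * ε x (f x) ∂μν := by
        refine integral_congr_ae (Eventually.of_forall fun x => ?_)
        simp only
        rw [← smul_eq_mul, ← map_smul, hψf]
      have h4 : ‖(∫ x, (ψ x : ℂ) * ε x (g i x) ∂μν) - ∫ x, (ψ x : ℂ) * ε x (f x) ∂μν‖ ≤
          δ * ∫ x, ψ x ∂μν := by
        rw [← integral_sub (hIntg _ (hg i)) (hIntg _ hf), ← integral_const_mul]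
        refine norm_integral_le_of_norm_le (hψi.const_mul δ)
          (Eventually.of_forall fun x => ?_)
        rw [← mul_sub, ← map_sub, norm_mul, Complex.norm_real,
          Real.norm_of_nonneg (hψr x).1, mul_comm]
        refine mul_le_mul_of_nonneg_right ((hle x _).trans ?_) (hψr x).1
        rw [norm_sub_rev]
        exact (hif x).le
      calc ‖ν f - ∫ x, ε x (f x) ∂μν‖
          = ‖(ν f - ν (fun x => (ψ x : ℂ) • g i x)) +
              ((∫ x, (ψ x : ℂ) * ε x (g i x) ∂μν) - ∫ x, (ψ x : ℂ) * ε x (f x) ∂μν)‖ := by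
            rw [h2, h3]; congr 1; ring
        _ ≤ δ * ∫ x, ψ x ∂μν + δ * ∫ x, ψ x ∂μν := (norm_add_le _ _).trans (add_le_add h1 h4)
        _ = _ := by ring
    rw [← sub_eq_zero, ← norm_le_zero_iff]
    have ht : Tendsto (fun n : ℕ => 1 / ((n : ℝ) + 1) * (2 * ∫ x, ψ x ∂μν)) atTop (𝓝 0) := by
      simpa using (tendsto_one_div_add_atTop_nhds_zero_nat (𝕜 := ℝ)).mul_const
        (2 * ∫ x, ψ x ∂μν)
    exact ge_of_tendsto' ht fun n => hbd _ (by positivity)
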